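/- Let (A, m) and (B, n) be Artinian Gorenstein local K-algebras, both with Hilbert function {1,n,n,1}. Then A and B are isomorphic as K-algebras if and only if their associated graded rings gr_m(A) and gr_n(B) are isomorphic as graded K-algebras. -/

import Mathlib

/-- The maximal ideal `M = (x_1, …, x_n)` of `R = K[[x_1,…,x_n]]`,
i.e. the ideal of power series with zero constant term. -/
noncomputable def mxR (K : Type*) [Field K] (n : ℕ) : Ideal (MvPowerSeries (Fin n) K) :=
  RingHom.ker (MvPowerSeries.constantCoeff (σ := Fin n) (R := K))

/-- The Hilbert function of `A = R/I` where `R = K[[x_1,…,x_n]]`: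
`HF_A(i) = dim_K (m^i/m^(i+1)) = dim_K A/m^(i+1) - dim_K A/m^i`, computed via
`A/m^j = R/(I + M^j)` where `M = (x_1,…,x_n)`. -/
noncomputable def hilbQ {K : Type*} [Field K] {n : ℕ}
    (I : Ideal (MvPowerSeries (Fin n) K)) (i : ℕ) : ℕ :=
  Module.finrank K (MvPowerSeries (Fin n) K ⧸ (I ⊔ mxR K n ^ (i + 1))) -
    Module.finrank K (MvPowerSeries (Fin n) K ⧸ (I ⊔ mxR K n ^ i))

/-- `dim_K` of the socle `(0 :_A m)` of `A = R/I`, where `m = M/I` is the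
maximal ideal of `A`.  The Artinian local ring `A = R/I` is Gorenstein iff
this equals `1`. -/
noncomputable def socDimQ {K : Type*} [Field K] {n : ℕ}
    (I : Ideal (MvPowerSeries (Fin n) K)) : ℕ :=
  Module.finrank K
    ((Submodule.colon (⊥ : Ideal (MvPowerSeries (Fin n) K ⧸ I))
      ((mxR K n).map (Ideal.Quotient.mk I))).restrictScalars K)

/-- The total degree `|α| = α 1 + ⋯ + α n` of a multi-index. -/
def degM {n : ℕ} (α : Fin n →₀ ℕ) : ℕ := ∑ i, α i

/-- The ideal `I^*` of `R` generated by the initial forms `f^*` of the elements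
`f ∈ I` (for `f ≠ 0` of order `d`, `f^*` is the degree-`d` homogeneous component
of `f`; the set below consists of all such initial forms, together with `0`).
For an ideal `I` with `R/I` Artinian, `R/I^*` is (canonically isomorphic to) the
associated graded ring `gr_m(R/I) = ⊕_{i ≥ 0} m^i/m^(i+1)` of `A = R/I`. -/
noncomputable def initialIdeal {K : Type*} [Field K] {n : ℕ}
    (I : Ideal (MvPowerSeries (Fin n) K)) : Ideal (MvPowerSeries (Fin n) K) :=
  Ideal.span { g | ∃ f ∈ I, ∃ d : ℕ,
    (∀ α : Fin n →₀ ℕ, degM α < d → MvPowerSeries.coeff (R := K) α f = 0) ∧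
    (∀ α : Fin n →₀ ℕ, MvPowerSeries.coeff (R := K) α g =
      if degM α = d then MvPowerSeries.coeff (R := K) α f else 0) }

/-- The space of homogeneous forms of degree `d` in `R = K[[x_1,…,x_n]]`. -/
noncomputable def homComponent (K : Type*) [Field K] (n d : ℕ) :
    Submodule K (MvPowerSeries (Fin n) K) where
  carrier := {f | ∀ α : Fin n →₀ ℕ, degM α ≠ d → MvPowerSeries.coeff (R := K) α f = 0}
  zero_mem' := fun α _ => by simp
  add_mem' := fun {a b} ha hb α h => by rw [map_add, ha α h, hb α h, add_zero]
  smul_mem' := fun c f hf α h => by rw [map_smul, hf α h, smul_zero]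

/-- The degree-`d` graded piece of the associated graded ring `gr_m(A) = R/I^*`,
namely the image in `R/I^*` of the degree-`d` homogeneous forms of `R`. -/
noncomputable def gradePiece {K : Type*} [Field K] {n : ℕ}
    (I : Ideal (MvPowerSeries (Fin n) K)) (d : ℕ) :
    Submodule K (MvPowerSeries (Fin n) K ⧸ initialIdeal I) :=
  Submodule.map (Ideal.Quotient.mkₐ K (initialIdeal I)).toLinearMap (homComponent K n d)


open MvPowerSeries in
lemma mem_pow_aux {K : Type*} [Field K] {n : ℕ} (k : ℕ) : ∀ f : MvPowerSeries (Fin n) K,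
    f ∈ mxR K n ^ k → ∀ α : Fin n →₀ ℕ, degM α < k → coeff α f = 0 := by
  induction k with
  | zero => intro f _ α h; simp at h
  | succ k ih =>
    intro f hf
    rw [pow_succ] at hf
    refine Submodule.mul_induction_on hf ?_ ?_
    · intro a ha b hb α hα
      classical
      rw [coeff_mul]
      refine Finset.sum_eq_zero fun p hp => ?_
      rw [Finset.HasAntidiagonal.mem_antidiagonal] at hp
      have hd : degM p.1 + degM p.2 = degM α := by
        rw [← hp]; simp [degM, Finset.sum_add_distrib]
      by_cases h2 : p.2 = 0
      · have : coeff p.2 b = 0 := by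
          rw [h2]; simpa [mxR, RingHom.mem_ker] using hb
        rw [this, mul_zero]
      · have : degM p.2 ≠ 0 := by
          intro h; apply h2; ext i
          simpa using (Finset.sum_eq_zero_iff.mp h) i (Finset.mem_univ i)
        rw [ih a ha p.1 (by omega), zero_mul]
    · intro x y hx hy α hα
      rw [map_add, hx α hα, hy α hα, add_zero]

open MvPowerSeries in
lemma split_aux {K : Type*} [Field K] {n : ℕ} (f : MvPowerSeries (Fin n) K) (k : ℕ)
    (hf : ∀ α : Fin n →₀ ℕ, degM α < k + 1 → coeff α f = 0) :
    ∃ g : Fin n → MvPowerSeries (Fin n) K, (∀ i, ∀ α, degM α < k → coeff α (g i) = 0) ∧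
      f = ∑ i, X i * g i := by
  classical
  refine ⟨fun i β => if (∀ j < i, β j = 0) then coeff (β + Finsupp.single i 1) f else 0, ?_, ?_⟩
  · intro i α hα
    have : degM (α + Finsupp.single i 1) = degM α + 1 := by
      simp [degM, Finset.sum_add_distrib, Finsupp.single_apply]
    change (if (∀ j < i, α j = 0) then coeff (α + Finsupp.single i 1) f else 0) = 0
    split_ifs
    · exact hf _ (by omega)
    · rfl
  · ext α
    rw [map_sum]
    have key : ∀ i : Fin n, coeff α ((X i : MvPowerSeries (Fin n) K) * (show MvPowerSeries (Fin n) K from fun β => if (∀ j < i, β j = 0) then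
        coeff (β + Finsupp.single i 1) f else 0)) =
        if (α i ≠ 0 ∧ ∀ j < i, α j = 0) then coeff α f else 0 := by
      intro i
      rw [show (X i : MvPowerSeries (Fin n) K) = monomial (Finsupp.single i 1) 1 from rfl,
        coeff_monomial_mul]
      by_cases h : Finsupp.single i 1 ≤ α
      · rw [if_pos h, one_mul]
        have h1 : α i ≠ 0 := by
          have := h i; simp at this; omega
        change (if (∀ j < i, (α - Finsupp.single i 1 : Fin n →₀ ℕ) j = 0) then
          coeff (α - Finsupp.single i 1 + Finsupp.single i 1) f else 0) = _
        rw [tsub_add_cancel_of_le h]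
        have : (∀ j < i, (α - Finsupp.single i 1 : Fin n →₀ ℕ) j = 0) ↔ (α i ≠ 0 ∧ ∀ j < i, α j = 0) := by
          constructor
          · intro h'
            refine ⟨h1, fun j hj => ?_⟩
            have := h' j hj
            simpa [Finsupp.single_apply, hj.ne'] using this
          · rintro ⟨_, h'⟩ j hj
            simp [h' j hj]
        simp only [this]
      · rw [if_neg h, if_neg]
        rintro ⟨h1, _⟩
        apply h
        rw [Finsupp.single_le_iff]; omega
    rw [Finset.sum_congr rfl (fun i _ => key i)]
    by_cases h0 : α = 0
    · subst h0
      rw [hf 0 (by simp [degM])]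
      simp
    · have hne : (Finset.univ.filter (fun i => α i ≠ 0)).Nonempty := by
        by_contra hc
        apply h0
        ext i
        by_contra hi
        exact hc ⟨i, by simpa using hi⟩
      set i0 := (Finset.univ.filter (fun i => α i ≠ 0)).min' hne with hi0
      have hm := Finset.min'_mem _ hne
      rw [← hi0] at hm
      simp only [Finset.mem_filter, Finset.mem_univ, true_and] at hm
      have hlt : ∀ j < i0, α j = 0 := by
        intro j hj
        by_contra hc
        have := Finset.min'_le (Finset.univ.filter (fun i => α i ≠ 0)) j (by simpa using hc)
        exact absurd hj (not_lt.mpr this)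
      rw [Finset.sum_eq_single i0]
      · rw [if_pos ⟨hm, hlt⟩]
      · intro b _ hb
        rw [if_neg]
        rintro ⟨h1, h2⟩
        rcases lt_or_gt_of_ne hb with h | h
        · exact h1 (hlt b h)
        · exact hm (h2 i0 h)
      · simp

open MvPowerSeries in
lemma X_mem_mxR {K : Type*} [Field K] {n : ℕ} (i : Fin n) :
    (X i : MvPowerSeries (Fin n) K) ∈ mxR K n := by
  simp [mxR, RingHom.mem_ker]

open MvPowerSeries in
lemma mem_pow_iff {K : Type*} [Field K] {n : ℕ} (k : ℕ) (f : MvPowerSeries (Fin n) K) :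
    f ∈ mxR K n ^ k ↔ ∀ α : Fin n →₀ ℕ, degM α < k → coeff α f = 0 := by
  refine ⟨mem_pow_aux k f, ?_⟩
  induction k generalizing f with
  | zero => intro _; simp
  | succ k ih =>
    intro hf
    obtain ⟨g, hg, rfl⟩ := split_aux f k hf
    refine Ideal.sum_mem _ fun i _ => ?_
    rw [pow_succ']
    exact Ideal.mul_mem_mul (X_mem_mxR i) (ih _ (hg i))

open MvPowerSeries in
/-- linear forms -/
noncomputable def VV (K : Type*) [Field K] (n : ℕ) : Submodule K (MvPowerSeries (Fin n) K) :=
  Submodule.span K (Set.range X)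

open MvPowerSeries in
lemma homComponent_mul {K : Type*} [Field K] {n d e : ℕ} {f g : MvPowerSeries (Fin n) K}
    (hf : f ∈ homComponent K n d) (hg : g ∈ homComponent K n e) :
    f * g ∈ homComponent K n (d + e) := by
  classical
  intro α hα
  rw [coeff_mul]
  refine Finset.sum_eq_zero fun p hp => ?_
  rw [Finset.HasAntidiagonal.mem_antidiagonal] at hp
  have hd : degM p.1 + degM p.2 = degM α := by
    rw [← hp]; simp [degM, Finset.sum_add_distrib]
  by_cases h : degM p.1 = d
  · rw [hg p.2 (by omega), mul_zero]
  · rw [hf p.1 h, zero_mul]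

open MvPowerSeries in
lemma X_mem_hom {K : Type*} [Field K] {n : ℕ} (i : Fin n) :
    (X i : MvPowerSeries (Fin n) K) ∈ homComponent K n 1 := by
  classical
  intro α hα
  rw [coeff_X, if_neg]
  rintro rfl
  apply hα
  simp [degM, Finsupp.single_apply]

lemma degM_eq {n : ℕ} (α : Fin n →₀ ℕ) : degM α = α.degree := by
  rw [Finsupp.degree_eq_sum]; rfl

open MvPowerSeries in
lemma hom_eq_VV_pow {K : Type*} [Field K] {n : ℕ} (d : ℕ) :
    homComponent K n d = VV K n ^ d := by
  classical
  apply le_antisymm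
  · intro f hf
    have hfin : {α : Fin n →₀ ℕ | degM α = d}.Finite := by
      refine (Finsupp.finite_of_degree_le (σ := Fin n) d).subset ?_
      intro α hα
      simp only [Set.mem_ofPred_eq, degM_eq] at hα ⊢
      exact hα.le
    have : f = ∑ α ∈ hfin.toFinset, coeff α f • monomial α (1 : K) := by
      ext β
      rw [map_sum]
      simp only [map_smul, coeff_monomial, smul_eq_mul, mul_ite, mul_one, mul_zero]
      rw [Finset.sum_ite_eq]
      split_ifs with h
      · rfl
      · apply hf; simpa using h
    rw [this]
    refine Submodule.sum_mem _ fun α hα => Submodule.smul_mem _ _ ?_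
    have hα : degM α = d := by simpa using hα
    have hm : monomial α (1 : K) = ∏ i, (X i : MvPowerSeries (Fin n) K) ^ α i := by
      have h2 := MvPolynomial.monomial_eq (R := K) (σ := Fin n) (s := α) (a := 1)
      have h3 := congrArg (fun p : MvPolynomial (Fin n) K => (p : MvPowerSeries (Fin n) K)) h2
      simp only [MvPolynomial.coe_monomial] at h3
      rw [h3, map_one, one_mul, Finsupp.prod_fintype _ _ (by simp)]
      rw [← MvPolynomial.coeToMvPowerSeries.ringHom_apply, map_prod]
      simp
    have hp : ∀ s : Finset (Fin n), ∏ i ∈ s, (X i : MvPowerSeries (Fin n) K) ^ α i ∈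
        VV K n ^ (∑ i ∈ s, α i) := by
      intro s
      induction s using Finset.induction_on with
      | empty => simp
      | insert a s ha ih =>
        rw [Finset.prod_insert ha, Finset.sum_insert ha, pow_add]
        exact Submodule.mul_mem_mul
          (Submodule.pow_mem_pow _ (show X a ∈ VV K n from Submodule.subset_span ⟨a, rfl⟩) _) ih
    rw [hm, ← hα]
    exact hp _
  · induction d with
    | zero =>
      rw [pow_zero]
      intro f hf
      obtain ⟨c, rfl⟩ := Submodule.mem_one.mp hf
      intro α hα
      rw [MvPowerSeries.algebraMap_apply, coeff_C, if_neg]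
      rintro rfl
      simp [degM] at hα
    | succ d ih =>
      rw [pow_succ, Submodule.mul_le]
      intro a ha b hb
      refine homComponent_mul (ih ha) ?_
      exact (Submodule.span_le.mpr (by rintro _ ⟨i, rfl⟩; exact X_mem_hom i)) hb

open MvPowerSeries in
lemma hom_le_pow {K : Type*} [Field K] {n d : ℕ} {f : MvPowerSeries (Fin n) K}
    (hf : f ∈ homComponent K n d) : f ∈ mxR K n ^ d := by
  rw [mem_pow_iff]
  intro α hα
  exact hf α hα.ne

open MvPowerSeries in
lemma comp_mem {K : Type*} [Field K] {n : ℕ} (d : ℕ) (f : MvPowerSeries (Fin n) K) :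
    homogeneousComponent d f ∈ homComponent K n d := by
  classical
  intro α hα
  rw [coeff_homogeneousComponent, if_neg (by rwa [← degM_eq])]

open MvPowerSeries in
lemma comp_of_mem {K : Type*} [Field K] {n d e : ℕ} {f : MvPowerSeries (Fin n) K}
    (hf : f ∈ homComponent K n d) : homogeneousComponent e f = if e = d then f else 0 := by
  classical
  ext α
  rw [coeff_homogeneousComponent, ← degM_eq]
  by_cases h : degM α = e
  · rw [if_pos h]
    split_ifs with h'
    · rfl
    · rw [hf α (by omega)]; simp
  · rw [if_neg h]
    split_ifs with h'
    · exact (hf α (by omega)).symm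
    · simp

open MvPowerSeries in
lemma comp_of_pow {K : Type*} [Field K] {n d e : ℕ} {f : MvPowerSeries (Fin n) K}
    (hf : f ∈ mxR K n ^ d) (h : e < d) : homogeneousComponent e f = 0 := by
  classical
  ext α
  rw [coeff_homogeneousComponent, ← degM_eq]
  split_ifs with h'
  · rw [(mem_pow_iff d f).mp hf α (by omega)]; simp
  · simp

open MvPowerSeries in
lemma sub_comp_mem {K : Type*} [Field K] {n d : ℕ} {f : MvPowerSeries (Fin n) K}
    (hf : f ∈ mxR K n ^ d) : f - homogeneousComponent d f ∈ mxR K n ^ (d + 1) := by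
  classical
  rw [mem_pow_iff] at *
  intro α hα
  rw [map_sub, coeff_homogeneousComponent, ← degM_eq]
  split_ifs with h'
  · simp
  · rw [hf α (by omega)]; simp

open MvPowerSeries in
lemma decomp4 {K : Type*} [Field K] {n : ℕ} (f : MvPowerSeries (Fin n) K) :
    ∃ r ∈ mxR K n ^ 4, f = homogeneousComponent 0 f + homogeneousComponent 1 f +
      homogeneousComponent 2 f + homogeneousComponent 3 f + r := by
  classical
  refine ⟨f - (homogeneousComponent 0 f + homogeneousComponent 1 f +
      homogeneousComponent 2 f + homogeneousComponent 3 f), ?_, by ring⟩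
  rw [mem_pow_iff]
  intro α hα
  simp only [map_sub, map_add, coeff_homogeneousComponent, ← degM_eq]
  have : degM α = 0 ∨ degM α = 1 ∨ degM α = 2 ∨ degM α = 3 := by omega
  rcases this with h | h | h | h <;> simp [h]

open MvPowerSeries Pointwise in
lemma VV_pow_induct {K : Type*} [Field K] {n : ℕ} {W : Type*} [AddCommGroup W] [Module K W]
    (D E : MvPowerSeries (Fin n) K →ₗ[K] W)
    (h0 : D 1 = E 1) (h1 : ∀ i, D (X i) = E (X i)) (h2 : ∀ i j, D (X i * X j) = E (X i * X j))
    (h3 : ∀ i j k, D (X i * X j * X k) = E (X i * X j * X k))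
    (hD : ∀ f ∈ mxR K n ^ 4, D f = 0) (hE : ∀ f ∈ mxR K n ^ 4, E f = 0) : D = E := by
  refine LinearMap.ext fun f => ?_
  obtain ⟨r, hr, hf⟩ := decomp4 f
  have key : ∀ d, d < 4 → ∀ g ∈ homComponent K n d, D g = E g := by
    intro d hd g hg
    rw [hom_eq_VV_pow, VV, Submodule.span_pow] at hg
    refine LinearMap.eqOn_span ?_ hg
    interval_cases d
    · intro x hx
      simp at hx; rw [hx, h0]
    · intro x hx
      rw [pow_one] at hx
      obtain ⟨i, rfl⟩ := hx; exact h1 i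
    · intro x hx
      rw [pow_two] at hx
      obtain ⟨_, ⟨i, rfl⟩, _, ⟨j, rfl⟩, rfl⟩ := hx; exact h2 i j
    · intro x hx
      rw [pow_succ, pow_two] at hx
      obtain ⟨_, ⟨_, ⟨i, rfl⟩, _, ⟨j, rfl⟩, rfl⟩, _, ⟨k, rfl⟩, rfl⟩ := hx; exact h3 i j k
  rw [hf]
  simp only [map_add, hD r hr, hE r hr]
  rw [key 0 (by omega) _ (comp_mem 0 f), key 1 (by omega) _ (comp_mem 1 f),
    key 2 (by omega) _ (comp_mem 2 f), key 3 (by omega) _ (comp_mem 3 f)]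


open MvPowerSeries in
/-- dual generator data -/
structure Good {K : Type*} [Field K] {n : ℕ} (I : Ideal (MvPowerSeries (Fin n) K))
    (L : MvPowerSeries (Fin n) K →ₗ[K] K) : Prop where
  h4 : ∀ f ∈ mxR K n ^ 4, L f = 0
  one : L 1 = 0
  ann : ∀ f, f ∈ I ↔ ∀ g, L (f * g) = 0
  rep : ∀ (a : K) (b : Fin n → K), ∃ p ∈ mxR K n ^ 2, L p = a ∧ ∀ i, L (p * X i) = b i
  le2 : I ≤ mxR K n ^ 2
  ex3 : ∃ s ∈ mxR K n ^ 3, L s ≠ 0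

open MvPowerSeries in
lemma mul_mem_pow {K : Type*} [Field K] {n : ℕ} {f g : MvPowerSeries (Fin n) K} {a b : ℕ} (c : ℕ)
    (hf : f ∈ mxR K n ^ a) (hg : g ∈ mxR K n ^ b) (h : c ≤ a + b) : f * g ∈ mxR K n ^ c := by
  have : f * g ∈ mxR K n ^ (a + b) := by rw [pow_add]; exact Ideal.mul_mem_mul hf hg
  exact Ideal.pow_le_pow_right h this

open MvPowerSeries in
lemma X_mem_pow {K : Type*} [Field K] {n : ℕ} (i : Fin n) :
    (X i : MvPowerSeries (Fin n) K) ∈ mxR K n ^ 1 := by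
  rw [pow_one]; exact X_mem_mxR i

open MvPowerSeries in
lemma crit {K : Type*} [Field K] {n : ℕ}
    {L : MvPowerSeries (Fin n) K →ₗ[K] K} (h4 : ∀ f ∈ mxR K n ^ 4, L f = 0)
    {x : MvPowerSeries (Fin n) K} (hx : x ∈ mxR K n ^ 2) (h0 : L x = 0)
    (h1 : ∀ i, L (x * X i) = 0) (g : MvPowerSeries (Fin n) K) : L (x * g) = 0 := by
  have : L ∘ₗ LinearMap.mulLeft K x = 0 := by
    apply VV_pow_induct
    · simpa using h0
    · intro i; simpa using h1 i
    · intro i j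
      simp only [LinearMap.comp_apply, LinearMap.mulLeft_apply, LinearMap.zero_apply]
      exact h4 _ (mul_mem_pow 4 hx (mul_mem_pow 2 (X_mem_pow i) (X_mem_pow j) le_rfl) le_rfl)
    · intro i j k
      simp only [LinearMap.comp_apply, LinearMap.mulLeft_apply, LinearMap.zero_apply]
      exact h4 _ (mul_mem_pow 4 hx (mul_mem_pow 2
        (mul_mem_pow 2 (X_mem_pow i) (X_mem_pow j) le_rfl) (X_mem_pow k) (by omega)) le_rfl)
    · intro f hf
      exact h4 _ (Ideal.mul_mem_left _ _ hf)
    · simp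
  exact LinearMap.congr_fun this g

open MvPowerSeries in
lemma decomp2 {K : Type*} [Field K] {n : ℕ} (f : MvPowerSeries (Fin n) K) :
    ∃ (c : K) (b : Fin n → K), ∃ r ∈ mxR K n ^ 2,
      f = c • (1 : MvPowerSeries (Fin n) K) + ∑ i, b i • X i + r := by
  have h0 : f ∈ mxR K n ^ 0 := by simp
  have h1 := sub_comp_mem h0
  have h2 := sub_comp_mem h1
  have hc := comp_mem 0 f
  rw [hom_eq_VV_pow, pow_zero] at hc
  obtain ⟨c, hc⟩ := Submodule.mem_one.mp hc
  have hb := comp_mem 1 (f - homogeneousComponent 0 f)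
  rw [hom_eq_VV_pow, pow_one] at hb
  obtain ⟨b, hb⟩ := (Submodule.mem_span_range_iff_exists_fun K).mp hb
  refine ⟨c, b, _, h2, ?_⟩
  rw [hb, ← Algebra.algebraMap_eq_smul_one, hc]
  simp

open MvPowerSeries in
lemma exists_good {K : Type*} [Field K] {n : ℕ} (I : Ideal (MvPowerSeries (Fin n) K))
    (hI0 : hilbQ I 0 = 1) (hI1 : hilbQ I 1 = n) (hI2 : hilbQ I 2 = n) (hI3 : hilbQ I 3 = 1)
    (hIm : mxR K n ^ 4 ≤ I) (hIG : socDimQ I = 1) : ∃ L, Good I L := by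
  unfold hilbQ at *
  have e4 : I ⊔ mxR K n ^ (3 + 1) = I := sup_eq_left.mpr hIm
  rw [e4] at hI3
  have fin : Module.Finite K (MvPowerSeries (Fin n) K ⧸ I) :=
    Module.finite_of_finrank_pos (by omega)
  have finq : ∀ J, I ≤ J → Module.Finite K (MvPowerSeries (Fin n) K ⧸ J) := by
    intro J hJ
    exact Module.Finite.of_surjective (Ideal.Quotient.factorₐ K hJ).toLinearMap
      (Ideal.Quotient.factor_surjective hJ)
  have mono : ∀ J J', I ≤ J → J ≤ J' → Module.finrank K (MvPowerSeries (Fin n) K ⧸ J') ≤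
      Module.finrank K (MvPowerSeries (Fin n) K ⧸ J) := by
    intro J J' h h'
    have := finq J h
    exact LinearMap.finrank_le_finrank_of_surjective
      (f := (Ideal.Quotient.factorₐ K h').toLinearMap) (Ideal.Quotient.factor_surjective h')
  have m : ∀ k, Module.finrank K (MvPowerSeries (Fin n) K ⧸ (I ⊔ mxR K n ^ k)) ≤
      Module.finrank K (MvPowerSeries (Fin n) K ⧸ (I ⊔ mxR K n ^ (k+1))) := fun k =>
    mono _ _ le_sup_left (sup_le_sup le_rfl (Ideal.pow_le_pow_right (Nat.le_succ k)))
  have z : Module.finrank K (MvPowerSeries (Fin n) K ⧸ (I ⊔ mxR K n ^ 0)) = 0 := by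
    have : I ⊔ mxR K n ^ 0 = ⊤ := by simp
    rw [this]
    have : Subsingleton (MvPowerSeries (Fin n) K ⧸ (⊤ : Ideal (MvPowerSeries (Fin n) K))) :=
      Ideal.Quotient.subsingleton_iff.mpr rfl
    exact Module.finrank_zero_of_subsingleton
  have m1 := m 1
  have m2 := m 2
  have m3 := m 3
  rw [e4] at m3
  have a1 : Module.finrank K (MvPowerSeries (Fin n) K ⧸ (I ⊔ mxR K n ^ 1)) -
    Module.finrank K (MvPowerSeries (Fin n) K ⧸ (I ⊔ mxR K n ^ 0)) = 1 := hI0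
  have a2 : Module.finrank K (MvPowerSeries (Fin n) K ⧸ (I ⊔ mxR K n ^ 2)) -
    Module.finrank K (MvPowerSeries (Fin n) K ⧸ (I ⊔ mxR K n ^ 1)) = n := hI1
  have a3 : Module.finrank K (MvPowerSeries (Fin n) K ⧸ (I ⊔ mxR K n ^ 3)) -
    Module.finrank K (MvPowerSeries (Fin n) K ⧸ (I ⊔ mxR K n ^ 2)) = n := hI2
  have b1 : Module.finrank K (MvPowerSeries (Fin n) K ⧸ (I ⊔ mxR K n ^ 1)) ≤
    Module.finrank K (MvPowerSeries (Fin n) K ⧸ (I ⊔ mxR K n ^ 2)) := m1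
  have b2 : Module.finrank K (MvPowerSeries (Fin n) K ⧸ (I ⊔ mxR K n ^ 2)) ≤
    Module.finrank K (MvPowerSeries (Fin n) K ⧸ (I ⊔ mxR K n ^ 3)) := m2
  have q2 : Module.finrank K (MvPowerSeries (Fin n) K ⧸ (I ⊔ mxR K n ^ 2)) = n + 1 := by omega
  have q4 : Module.finrank K (MvPowerSeries (Fin n) K ⧸ I) = 2 * n + 2 := by omega
  -- I ≤ M^2
  have le2 : I ≤ mxR K n ^ 2 := by
    let T : (K × (Fin n → K)) →ₗ[K] MvPowerSeries (Fin n) K :=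
      (LinearMap.toSpanSingleton K _ 1).coprod (Fintype.linearCombination K X)
    have hT : ∀ c b, T (c, b) = c • (1 : MvPowerSeries (Fin n) K) + ∑ i, b i • X i := by
      intro c b
      simp [T, Fintype.linearCombination_apply]
    let T' := (Ideal.Quotient.mkₐ K (I ⊔ mxR K n ^ 2)).toLinearMap ∘ₗ T
    have hs : Function.Surjective T' := by
      intro y
      obtain ⟨f, rfl⟩ := Ideal.Quotient.mk_surjective y
      obtain ⟨c, b, r, hr, hf⟩ := decomp2 f
      refine ⟨(c, b), ?_⟩
      change Ideal.Quotient.mk _ (T (c, b)) = _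
      rw [Ideal.Quotient.eq, hT]
      have e : (c • (1 : MvPowerSeries (Fin n) K) + ∑ i, b i • X i) - f = -r := by rw [hf]; abel
      rw [e]
      exact Ideal.mem_sup_right (neg_mem hr)
    have := finq _ (le_sup_left : I ≤ I ⊔ mxR K n ^ 2)
    have hi : Function.Injective T' := by
      refine (LinearMap.injective_iff_surjective_of_finrank_eq_finrank ?_).mpr hs
      rw [q2]; simp [add_comm]
    intro f hf
    obtain ⟨c, b, r, hr, hf'⟩ := decomp2 f
    have : T' (c, b) = 0 := by
      change Ideal.Quotient.mk _ (T (c, b)) = _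
      rw [Ideal.Quotient.eq_zero_iff_mem, hT, ← add_sub_cancel_right (_ + _) r, ← hf']
      exact sub_mem (Ideal.mem_sup_left hf) (Ideal.mem_sup_right hr)
    have h0 := hi (this.trans (map_zero T').symm)
    rw [hf', ← hT, h0, map_zero, zero_add]
    exact hr
  -- s
  obtain ⟨s, hs, hsI⟩ : ∃ s ∈ mxR K n ^ 3, s ∉ I := by
    by_contra hc
    push Not at hc
    have : I ⊔ mxR K n ^ 3 = I := sup_eq_left.mpr hc
    rw [this] at hI3
    omega
  have hle1 : ∀ f ∈ I, f ∈ mxR K n := fun f hf => by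
    have := Ideal.pow_le_pow_right (show 1 ≤ 2 by omega) (le2 hf)
    rwa [pow_one] at this
  have hs1 : s ∈ mxR K n := by
    have := Ideal.pow_le_pow_right (show 1 ≤ 3 by omega) hs
    rwa [pow_one] at this
  have hsn : s ∉ (I.restrictScalars K ⊔ Submodule.span K {1} :
      Submodule K (MvPowerSeries (Fin n) K)) := by
    intro h
    obtain ⟨y, hy, z, hz, hyz⟩ := Submodule.mem_sup.mp h
    obtain ⟨c, rfl⟩ := Submodule.mem_span_singleton.mp hz
    have hy' : y ∈ I := hy
    have h2 : c • (1 : MvPowerSeries (Fin n) K) ∈ mxR K n := by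
      rw [← add_sub_cancel_left y (c • 1), hyz]
      exact sub_mem hs1 (hle1 y hy')
    have h3 : c = 0 := by
      rw [mxR, RingHom.mem_ker] at h2
      simpa using h2
    apply hsI
    rw [← hyz, h3, zero_smul, add_zero]
    exact hy'
  obtain ⟨L, hLs, hL⟩ := Submodule.exists_le_ker_of_notMem hsn
  have hLI : ∀ f ∈ I, L f = 0 := fun f hf => hL (Submodule.mem_sup_left hf)
  have hL1 : L 1 = 0 := hL (Submodule.mem_sup_right (Submodule.mem_span_singleton_self 1))
  have h4 : ∀ f ∈ mxR K n ^ 4, L f = 0 := fun f hf => hLI f (hIm hf)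
  -- socle
  have soc : ∀ f, f ∉ I → (∀ g ∈ mxR K n, f * g ∈ I) → ∀ f', (∀ g ∈ mxR K n, f' * g ∈ I) →
      ∃ c : K, c • f - f' ∈ I := by
    intro f hfI hf f' hf'
    have mem : ∀ f, (∀ g ∈ mxR K n, f * g ∈ I) → Ideal.Quotient.mk I f ∈
       ((Submodule.colon (⊥ : Ideal (MvPowerSeries (Fin n) K ⧸ I))
      ((mxR K n).map (Ideal.Quotient.mk I))).restrictScalars K) := by
      intro f hf
      rw [Submodule.restrictScalars_mem, Submodule.mem_colon]
      intro p hp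
      obtain ⟨g, hg, rfl⟩ := (Ideal.mem_map_iff_of_surjective _ Ideal.Quotient.mk_surjective).mp hp
      rw [smul_eq_mul, ← map_mul, Ideal.mem_bot, Ideal.Quotient.eq_zero_iff_mem]
      exact hf g hg
    unfold socDimQ at hIG
    have := (finrank_eq_one_iff_of_nonzero' ⟨_, mem f hf⟩ (by
      intro h
      apply hfI
      rw [← Ideal.Quotient.eq_zero_iff_mem]
      exact congrArg Subtype.val h)).mp hIG ⟨_, mem f' hf'⟩
    obtain ⟨c, hc⟩ := this
    refine ⟨c, ?_⟩
    rw [← Ideal.Quotient.eq]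
    exact congrArg Subtype.val hc
  have hssoc : ∀ g ∈ mxR K n, s * g ∈ I := fun g hg => hIm (by
    rw [pow_succ]; exact Ideal.mul_mem_mul hs hg)
  have ann : ∀ f, f ∈ I ↔ ∀ g, L (f * g) = 0 := by
    intro f
    refine ⟨fun hf g => hLI _ (Ideal.mul_mem_right _ _ hf), ?_⟩
    intro h
    by_contra hfI
    have step : ∀ k, ∃ g, f * g ∉ I ∧ ((∀ x ∈ mxR K n, f * g * x ∈ I) ∨ g ∈ mxR K n ^ k) := by
      intro k
      induction k with
      | zero => exact ⟨1, by simpa using hfI, Or.inr (by simp)⟩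
      | succ k ih =>
        obtain ⟨g, hg, h1 | h1⟩ := ih
        · exact ⟨g, hg, Or.inl h1⟩
        · by_cases hx : ∀ x ∈ mxR K n, f * g * x ∈ I
          · exact ⟨g, hg, Or.inl hx⟩
          · push Not at hx
            obtain ⟨x, hx, hx'⟩ := hx
            refine ⟨g * x, by rwa [← mul_assoc], Or.inr ?_⟩
            rw [pow_succ]; exact Ideal.mul_mem_mul h1 hx
    obtain ⟨g, hg, h1 | h1⟩ := step 4
    · obtain ⟨c, hc⟩ := soc _ hg h1 s hssoc
      have := hLI _ hc
      rw [map_sub, map_smul, h g, smul_zero, zero_sub, neg_eq_zero] at this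
      exact hLs this
    · exact hg (Ideal.mul_mem_left _ _ (hIm h1))
  refine ⟨L, h4, hL1, ann, ?_, le2, s, hs, hLs⟩
  have e2 : I ⊔ mxR K n ^ 2 = mxR K n ^ 2 := sup_eq_right.mpr le2
  rw [e2] at q2
  let Φ : MvPowerSeries (Fin n) K →ₗ[K] (K × (Fin n → K)) × (MvPowerSeries (Fin n) K ⧸ mxR K n ^ 2) :=
    (L.prod (LinearMap.pi fun i => L ∘ₗ LinearMap.mulRight K (X i))).prod
      (Ideal.Quotient.mkₐ K (mxR K n ^ 2)).toLinearMap
  have hΦ : ∀ p, Φ p = ((L p, fun i => L (p * X i)), Ideal.Quotient.mk _ p) := fun p => rfl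
  have hk : LinearMap.ker Φ = I.restrictScalars K := by
    ext p
    rw [LinearMap.mem_ker, hΦ, Submodule.restrictScalars_mem]
    constructor
    · intro h
      simp only [Prod.mk_eq_zero] at h
      obtain ⟨⟨h0, h1⟩, h2⟩ := h
      rw [ann]
      exact crit h4 (Ideal.Quotient.eq_zero_iff_mem.mp h2) h0 (fun i => congrFun h1 i)
    · intro h
      simp only [Prod.mk_eq_zero]
      refine ⟨⟨hLI p h, ?_⟩, Ideal.Quotient.eq_zero_iff_mem.mpr (le2 h)⟩
      ext i
      exact (ann p).mp h (X i)
  let E := Submodule.Quotient.restrictScalarsEquiv K I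
  have := finq _ le2
  have : Module.Finite K (MvPowerSeries (Fin n) K ⧸ I.restrictScalars K) :=
    Module.Finite.equiv E.symm
  have hsurj : Function.Surjective ((I.restrictScalars K).liftQ Φ hk.ge) := by
    refine (LinearMap.injective_iff_surjective_of_finrank_eq_finrank ?_).mp ?_
    · rw [E.finrank_eq, q4]
      simp [q2]; omega
    · rw [← LinearMap.ker_eq_bot]
      exact Submodule.ker_liftQ_eq_bot _ _ _ hk.le
  intro a b
  obtain ⟨y, hy⟩ := hsurj ((a, b), 0)
  obtain ⟨p, rfl⟩ := Submodule.mkQ_surjective _ y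
  rw [Submodule.mkQ_apply, Submodule.liftQ_apply, hΦ] at hy
  simp only [Prod.mk.injEq] at hy
  exact ⟨p, Ideal.Quotient.eq_zero_iff_mem.mp hy.2, hy.1.1, fun i => congrFun hy.1.2 i⟩


open MvPowerSeries in
/-- cubic part of a functional -/
noncomputable def cub {K : Type*} [Field K] {n : ℕ} (L : MvPowerSeries (Fin n) K →ₗ[K] K) :
    MvPowerSeries (Fin n) K →ₗ[K] K := L ∘ₗ homogeneousComponent 3

open MvPowerSeries in
lemma cub_hom {K : Type*} [Field K] {n : ℕ} (L : MvPowerSeries (Fin n) K →ₗ[K] K) {d : ℕ}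
    {f : MvPowerSeries (Fin n) K} (hf : f ∈ homComponent K n d) :
    cub L f = if d = 3 then L f else 0 := by
  rw [cub, LinearMap.comp_apply, comp_of_mem hf]
  by_cases h : d = 3
  · simp [h]
  · rw [if_neg h, if_neg (Ne.symm h), map_zero]

open MvPowerSeries in
lemma cub_pow4 {K : Type*} [Field K] {n : ℕ} (L : MvPowerSeries (Fin n) K →ₗ[K] K)
    {f : MvPowerSeries (Fin n) K} (hf : f ∈ mxR K n ^ 4) : cub L f = 0 := by
  rw [cub, LinearMap.comp_apply, comp_of_pow hf (by omega), map_zero]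

open MvPowerSeries in
lemma cub_mul_hom {K : Type*} [Field K] {n : ℕ} (L : MvPowerSeries (Fin n) K →ₗ[K] K) {d e : ℕ}
    (f : MvPowerSeries (Fin n) K) {h : MvPowerSeries (Fin n) K} (hh : h ∈ homComponent K n e)
    (hde : d + e = 3) : cub L (f * h) = L (homogeneousComponent d f * h) := by
  obtain ⟨r, hr, hf⟩ := decomp4 f
  have key : ∀ a, cub L (homogeneousComponent a f * h) =
      if a = d then L (homogeneousComponent a f * h) else 0 := by
    intro a
    rw [cub_hom L (homComponent_mul (comp_mem a f) hh)]
    have : a + e = 3 ↔ a = d := by omega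
    simp only [this]
  conv_lhs => rw [hf]
  simp only [add_mul, map_add, key, cub_pow4 L (Ideal.mul_mem_right h _ hr)]
  have : d = 0 ∨ d = 1 ∨ d = 2 ∨ d = 3 := by omega
  rcases this with rfl | rfl | rfl | rfl <;> simp

open MvPowerSeries in
lemma nondeg {K : Type*} [Field K] {n : ℕ} {I : Ideal (MvPowerSeries (Fin n) K)}
    {L : MvPowerSeries (Fin n) K →ₗ[K] K} (G : Good I L) {v : MvPowerSeries (Fin n) K}
    (hv : v ∈ homComponent K n 1) (h : ∀ q ∈ homComponent K n 2, L (v * q) = 0) : v = 0 := by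
  have hv' := hv
  rw [hom_eq_VV_pow, pow_one] at hv'
  obtain ⟨b, hb⟩ := (Submodule.mem_span_range_iff_exists_fun K).mp hv'
  have : ∀ i, b i = 0 := by
    intro i
    obtain ⟨p, hp, -, hp1⟩ := G.rep 0 (Pi.single i 1)
    have h1 : L (v * p) = 0 := by
      have h2 := sub_comp_mem hp
      have h3 := G.h4 _ (mul_mem_pow 4 (hom_le_pow hv) h2 le_rfl)
      rw [mul_sub, map_sub, h _ (comp_mem 2 p), sub_zero] at h3
      exact h3
    rw [← hb, Finset.sum_mul, map_sum] at h1
    simp only [mul_comm _ p, mul_smul_comm, map_smul, hp1] at h1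
    simpa [Pi.single_apply] using h1
  rw [← hb]
  simp [this]

open MvPowerSeries in
lemma initial_of_mem {K : Type*} [Field K] {n : ℕ} {I : Ideal (MvPowerSeries (Fin n) K)}
    {f p : MvPowerSeries (Fin n) K} {d : ℕ} (hf : f ∈ homComponent K n d)
    (hp : p ∈ mxR K n ^ (d + 1)) (h : f + p ∈ I) : f ∈ initialIdeal I := by
  apply Ideal.subset_span
  refine ⟨f + p, h, d, ?_, ?_⟩
  · intro α hα
    rw [map_add, hf α hα.ne, (mem_pow_iff _ _).mp hp α (by omega), add_zero]
  · intro α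
    split_ifs with h'
    · rw [map_add, (mem_pow_iff _ _).mp hp α (by omega), add_zero]
    · exact hf α h'

open MvPowerSeries in
lemma mxR_eq_span {K : Type*} [Field K] {n : ℕ} : mxR K n = Ideal.span (Set.range X) := by
  apply le_antisymm
  · intro f hf
    rw [← pow_one (mxR K n), mem_pow_iff] at hf
    obtain ⟨g, -, rfl⟩ := split_aux f 0 hf
    exact Ideal.sum_mem _ fun i _ => Ideal.mul_mem_right _ _ (Ideal.subset_span ⟨i, rfl⟩)
  · rw [Ideal.span_le]
    rintro _ ⟨i, rfl⟩
    exact X_mem_mxR i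

open MvPowerSeries in
lemma pow_le_of_hom {K : Type*} [Field K] {n : ℕ} (k : ℕ) :
    ∀ J : Ideal (MvPowerSeries (Fin n) K),
    (∀ f ∈ homComponent K n k, f ∈ J) → mxR K n ^ k ≤ J := by
  intro J hJ
  suffices h : mxR K n ^ k ≤ Ideal.span (homComponent K n k : Set _) from
    h.trans (Ideal.span_le.mpr hJ)
  clear hJ
  induction k with
  | zero =>
    intro f _
    have h1 : (1 : MvPowerSeries (Fin n) K) ∈ Ideal.span (homComponent K n 0 : Set _) := by
      apply Ideal.subset_span
      rw [SetLike.mem_coe, hom_eq_VV_pow, pow_zero]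
      exact Submodule.one_le.mp le_rfl
    simpa using Ideal.mul_mem_left _ f h1
  | succ k ih =>
    rw [pow_succ]
    refine (Ideal.mul_mono ih (mxR_eq_span.le)).trans ?_
    rw [Ideal.span_mul_span']
    apply Ideal.span_mono
    rintro _ ⟨a, ha, _, ⟨i, rfl⟩, rfl⟩
    exact homComponent_mul ha (X_mem_hom i)

open MvPowerSeries in
lemma initial_iff {K : Type*} [Field K] {n : ℕ} {I : Ideal (MvPowerSeries (Fin n) K)}
    {L : MvPowerSeries (Fin n) K →ₗ[K] K} (G : Good I L) (f : MvPowerSeries (Fin n) K) :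
    f ∈ initialIdeal I ↔ ∀ g, cub L (f * g) = 0 := by
  constructor
  · intro hf
    unfold initialIdeal at hf
    induction hf using Submodule.span_induction with
    | zero => simp
    | add x y _ _ hx hy => intro g; rw [add_mul, map_add, hx, hy, add_zero]
    | smul a x _ hx => intro g; rw [smul_eq_mul, mul_comm a x, mul_assoc]; exact hx _
    | mem g hg =>
      obtain ⟨f, hfI, d, h1, h2⟩ := hg
      have hf : f ∈ mxR K n ^ d := (mem_pow_iff _ _).mpr h1
      have hg : g ∈ homComponent K n d := by
        intro α hα; rw [h2, if_neg hα]
      have hfg : f - g ∈ mxR K n ^ (d + 1) := by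
        rw [mem_pow_iff]
        intro α hα
        rw [map_sub, h2]
        split_ifs with h
        · simp
        · rw [h1 α (by omega), sub_zero]
      intro h
      have key : ∀ e, cub L (g * homogeneousComponent e h) = 0 := by
        intro e
        rw [cub_hom L (homComponent_mul hg (comp_mem e h))]
        split_ifs with hde
        · have a := G.h4 _ (mul_mem_pow 4 hfg (hom_le_pow (comp_mem e h)) (by omega))
          rw [sub_mul, map_sub, (G.ann f).mp hfI, zero_sub, neg_eq_zero] at a
          exact a
        · rfl
      obtain ⟨r, hr, hh⟩ := decomp4 h
      rw [hh]
      simp only [mul_add, map_add, key, cub_pow4 L (Ideal.mul_mem_left _ g hr), add_zero]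
  · intro H
    obtain ⟨s, hs, hLs⟩ := G.ex3
    have hmem : ∀ (d : ℕ) (h : MvPowerSeries (Fin n) K), ∀ e, h ∈ homComponent K n e → d + e = 3 →
        L (homogeneousComponent d f * h) = 0 := by
      intro d h e hh hde
      rw [← cub_mul_hom L f hh hde, H]
    obtain ⟨r, hr, hf⟩ := decomp4 f
    have f0 : homogeneousComponent 0 f = 0 := by
      have hc := comp_mem 0 f
      rw [hom_eq_VV_pow, pow_zero] at hc
      obtain ⟨c, hc⟩ := Submodule.mem_one.mp hc
      have h1 := hmem 0 _ 3 (comp_mem 3 s) rfl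
      have h2 : L (homogeneousComponent 3 s) ≠ 0 := by
        have := G.h4 _ (sub_comp_mem hs)
        rw [map_sub, sub_eq_zero] at this
        rwa [← this]
      rw [← hc, Algebra.algebraMap_eq_smul_one, smul_mul_assoc, one_mul, map_smul,
        smul_eq_mul] at h1
      have : c = 0 := (mul_eq_zero.mp h1).resolve_right h2
      rw [← hc, this, map_zero]
    have f1 : homogeneousComponent 1 f = 0 :=
      nondeg G (comp_mem 1 f) fun q hq => hmem 1 q 2 hq rfl
    have f3 : homogeneousComponent 3 f ∈ initialIdeal I := by
      refine initial_of_mem (comp_mem 3 f) (Ideal.zero_mem _) ?_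
      rw [add_zero, G.ann]
      refine crit G.h4 (Ideal.pow_le_pow_right (by omega) (hom_le_pow (comp_mem 3 f))) ?_ ?_
      · have := hmem 3 1 0 (by
          rw [hom_eq_VV_pow, pow_zero]; exact Submodule.one_le.mp le_rfl) rfl
        rwa [mul_one] at this
      · intro i
        exact G.h4 _ (mul_mem_pow 4 (hom_le_pow (comp_mem 3 f)) (X_mem_pow i) le_rfl)
    have f2 : homogeneousComponent 2 f ∈ initialIdeal I := by
      set t : K := - L (homogeneousComponent 2 f) / L s
      have hts : t • s ∈ mxR K n ^ 3 := by
        rw [Algebra.smul_def]; exact Ideal.mul_mem_left _ _ hs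
      refine initial_of_mem (p := t • s) (comp_mem 2 f) hts ?_
      rw [G.ann]
      refine crit G.h4 (add_mem (hom_le_pow (comp_mem 2 f))
        (Ideal.pow_le_pow_right (by omega) hts)) ?_ ?_
      · rw [map_add, map_smul, smul_eq_mul, div_mul_cancel₀ _ hLs]; ring
      · intro i
        rw [add_mul, map_add, hmem 2 _ 1 (X_mem_hom i) rfl,
          G.h4 _ (mul_mem_pow 4 hts (X_mem_pow i) le_rfl), add_zero]
    have f4 : r ∈ initialIdeal I := by
      refine pow_le_of_hom 4 _ ?_ hr
      intro x hx
      refine initial_of_mem hx (Ideal.zero_mem _) ?_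
      rw [add_zero, G.ann]
      intro g
      exact G.h4 _ (Ideal.mul_mem_right _ _ (hom_le_pow hx))
    rw [hf, f0, f1]
    exact add_mem (add_mem (add_mem (by simp) f2) f3) f4

lemma alg_map_pow {K : Type*} [Field K] {n : ℕ}
    (ψ : MvPowerSeries (Fin n) K →ₐ[K] MvPowerSeries (Fin n) K)
    (hM : ∀ x ∈ mxR K n, ψ x ∈ mxR K n) (k : ℕ) : ∀ x ∈ mxR K n ^ k, ψ x ∈ mxR K n ^ k := by
  intro x hx
  have h : mxR K n ≤ (mxR K n).comap ψ := hM
  have := Ideal.mem_map_of_mem ψ hx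
  rw [Ideal.map_pow] at this
  exact Ideal.pow_right_mono (Ideal.map_le_iff_le_comap.mpr h) k this

lemma surj_aux {K : Type*} [Field K] {n : ℕ}
    (ψ : MvPowerSeries (Fin n) K →ₐ[K] MvPowerSeries (Fin n) K)
    (hM : ∀ x ∈ mxR K n, ψ x ∈ mxR K n)
    (hs : ∀ x ∈ mxR K n, ∃ x' ∈ mxR K n, x - ψ x' ∈ mxR K n ^ 2) (y : MvPowerSeries (Fin n) K)
    (k : ℕ) : ∃ x, y - ψ x ∈ mxR K n ^ k := by
  have step : ∀ k, ∀ x ∈ mxR K n ^ k, ∃ x' ∈ mxR K n ^ k, x - ψ x' ∈ mxR K n ^ (k + 1) := by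
    intro k
    induction k with
    | zero =>
      intro x _
      obtain ⟨c, b, r, hr, hf⟩ := decomp2 x
      refine ⟨c • 1, by simp, ?_⟩
      rw [map_smul, map_one, hf]
      have : c • (1 : MvPowerSeries (Fin n) K) + ∑ i, b i • MvPowerSeries.X i + r - c • 1 =
        ∑ i, b i • MvPowerSeries.X i + r := by abel
      rw [this]
      refine add_mem (Ideal.sum_mem _ fun i _ => ?_) (Ideal.pow_le_pow_right (by omega) hr)
      rw [Algebra.smul_def]
      exact Ideal.mul_mem_left _ _ (X_mem_pow i)
    | succ k ih =>
      intro x hx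
      rw [pow_succ] at hx
      refine Submodule.mul_induction_on hx ?_ ?_
      · intro a ha b hb
        obtain ⟨a', ha', h1⟩ := ih a ha
        obtain ⟨b', hb', h2⟩ := hs b hb
        refine ⟨a' * b', by rw [pow_succ]; exact Ideal.mul_mem_mul ha' hb', ?_⟩
        have : a * b - ψ (a' * b') = (a - ψ a') * b + ψ a' * (b - ψ b') := by
          rw [map_mul]; ring
        rw [this]
        refine add_mem ?_ ?_
        · rw [pow_succ]; exact Ideal.mul_mem_mul h1 hb
        · exact mul_mem_pow _ (alg_map_pow ψ hM k _ ha') h2 (by omega)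
      · rintro a b ⟨a', ha', h1⟩ ⟨b', hb', h2⟩
        refine ⟨a' + b', add_mem ha' hb', ?_⟩
        rw [map_add, add_sub_add_comm]
        exact add_mem h1 h2
  induction k with
  | zero => exact ⟨0, by simp⟩
  | succ k ih =>
    obtain ⟨x, hx⟩ := ih
    obtain ⟨x', -, hx'⟩ := step k _ hx
    refine ⟨x + x', ?_⟩
    rw [map_add, ← sub_sub]
    exact hx'

lemma iso_aux {K : Type*} [Field K] {n : ℕ}
    (ψ : MvPowerSeries (Fin n) K →ₐ[K] MvPowerSeries (Fin n) K)
    (hM : ∀ x ∈ mxR K n, ψ x ∈ mxR K n)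
    (hs : ∀ x ∈ mxR K n, ∃ x' ∈ mxR K n, x - ψ x' ∈ mxR K n ^ 2)
    (I J : Ideal (MvPowerSeries (Fin n) K)) (D E : MvPowerSeries (Fin n) K →ₗ[K] K)
    (hE : ∀ f ∈ mxR K n ^ 4, E f = 0)
    (hI : ∀ f, f ∈ I ↔ ∀ g, D (f * g) = 0) (hJ : ∀ f, f ∈ J ↔ ∀ g, E (f * g) = 0)
    (c : K) (hc : c ≠ 0) (h : ∀ f, E (ψ f) = c * D f) :
    ∃ e : (MvPowerSeries (Fin n) K ⧸ I) ≃ₐ[K] (MvPowerSeries (Fin n) K ⧸ J),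
      ∀ f, e (Ideal.Quotient.mk I f) = Ideal.Quotient.mk J (ψ f) := by
  have hiff : ∀ f, ψ f ∈ J ↔ f ∈ I := by
    intro f
    rw [hI, hJ]
    constructor
    · intro H g
      have := H (ψ g)
      rw [← map_mul, h] at this
      exact (mul_eq_zero.mp this).resolve_left hc
    · intro H g
      obtain ⟨x, hx⟩ := surj_aux ψ hM hs g 4
      have h1 := hE _ (Ideal.mul_mem_left _ (ψ f) hx)
      rw [mul_sub, map_sub, ← map_mul, h, H, mul_zero, sub_zero] at h1
      exact h1
  let F : (MvPowerSeries (Fin n) K ⧸ I) →ₐ[K] (MvPowerSeries (Fin n) K ⧸ J) :=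
    Ideal.Quotient.liftₐ I ((Ideal.Quotient.mkₐ K J).comp ψ) (fun a ha => by
      change Ideal.Quotient.mk J (ψ a) = 0
      rw [Ideal.Quotient.eq_zero_iff_mem, hiff]
      exact ha)
  have hF : ∀ f, F (Ideal.Quotient.mk I f) = Ideal.Quotient.mk J (ψ f) := fun f => rfl
  refine ⟨AlgEquiv.ofBijective F ⟨?_, ?_⟩, hF⟩
  · rw [injective_iff_map_eq_zero]
    intro a ha
    obtain ⟨f, rfl⟩ := Ideal.Quotient.mk_surjective a
    rw [hF, Ideal.Quotient.eq_zero_iff_mem, hiff] at ha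
    exact Ideal.Quotient.eq_zero_iff_mem.mpr ha
  · intro y
    obtain ⟨y, rfl⟩ := Ideal.Quotient.mk_surjective y
    obtain ⟨x, hx⟩ := surj_aux ψ hM hs y 4
    refine ⟨Ideal.Quotient.mk I x, ?_⟩
    rw [hF, eq_comm, Ideal.Quotient.eq, hJ]
    intro g
    exact hE _ (Ideal.mul_mem_right _ _ hx)


open MvPowerSeries in
lemma exists_hom {K : Type*} [Field K] {n : ℕ} (a : Fin n → MvPowerSeries (Fin n) K)
    (ha : ∀ i, a i ∈ mxR K n) :
    ∃ ψ : MvPowerSeries (Fin n) K →ₐ[K] MvPowerSeries (Fin n) K,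
      (∀ i, ψ (X i) = a i) ∧ ∀ x ∈ mxR K n, ψ x ∈ mxR K n := by
  have hS : HasSubst a := hasSubst_of_constantCoeff_zero fun i => by
    have := ha i
    rwa [mxR, RingHom.mem_ker] at this
  have hX : ∀ i, (substAlgHom hS : MvPowerSeries (Fin n) K →ₐ[K] MvPowerSeries (Fin n) K) (X i) =
      a i := fun i => substAlgHom_X hS i
  refine ⟨substAlgHom hS, hX, ?_⟩
  intro x hx
  have h : mxR K n ≤ (mxR K n).comap
      (substAlgHom hS : MvPowerSeries (Fin n) K →ₐ[K] MvPowerSeries (Fin n) K) := by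
    conv_lhs => rw [mxR_eq_span]
    rw [Ideal.span_le]
    rintro _ ⟨i, rfl⟩
    change substAlgHom hS (X i) ∈ mxR K n
    rw [hX]
    exact ha i
  exact h hx

lemma VV_mem_pow {K : Type*} [Field K] {n : ℕ} {v : MvPowerSeries (Fin n) K} (hv : v ∈ VV K n) :
    v ∈ mxR K n ^ 1 := hom_le_pow (by rw [hom_eq_VV_pow, pow_one]; exact hv)

open MvPowerSeries in
lemma gr_iso {K : Type*} [Field K] [CharZero K] {n : ℕ} {I : Ideal (MvPowerSeries (Fin n) K)}
    {L : MvPowerSeries (Fin n) K →ₗ[K] K} (G : Good I L) :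
    Nonempty ((MvPowerSeries (Fin n) K ⧸ initialIdeal I) ≃ₐ[K] (MvPowerSeries (Fin n) K ⧸ I)) := by
  choose p hp2 hp hpX using fun j => G.rep (-L (X j)) (fun i => -L (X j * X i) / 2)
  have hle : mxR K n ^ 2 ≤ mxR K n := Ideal.pow_le_self (by omega)
  obtain ⟨ψ, hψ, hM⟩ := exists_hom (fun i => X i + p i)
    (fun i => add_mem (X_mem_mxR i) (hle (hp2 i)))
  have hV : ∀ v ∈ VV K n, ψ v - v ∈ mxR K n ^ 2 := by
    intro v hv
    unfold VV at hv
    induction hv using Submodule.span_induction with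
    | zero => simp
    | mem x hx =>
      obtain ⟨i, rfl⟩ := hx
      rw [hψ, add_sub_cancel_left]; exact hp2 i
    | add x y _ _ hx hy => rw [map_add, add_sub_add_comm]; exact add_mem hx hy
    | smul a x _ hx =>
      rw [map_smul, ← smul_sub, Algebra.smul_def]; exact Ideal.mul_mem_left _ _ hx
  have hs : ∀ x ∈ mxR K n, ∃ x' ∈ mxR K n, x - ψ x' ∈ mxR K n ^ 2 := by
    intro x hx
    have hc : homogeneousComponent 1 x ∈ VV K n := by
      have := comp_mem 1 x
      rwa [hom_eq_VV_pow, pow_one] at this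
    refine ⟨homogeneousComponent 1 x, by simpa using VV_mem_pow hc, ?_⟩
    have h1 := sub_comp_mem (show x ∈ mxR K n ^ 1 by rwa [pow_one])
    have h2 := sub_mem h1 (hV _ hc)
    rwa [sub_sub_sub_cancel_right] at h2
  have key : L ∘ₗ ψ.toLinearMap = cub L := by
    apply VV_pow_induct
    · have h1 : (1 : MvPowerSeries (Fin n) K) ∈ homComponent K n 0 := by
        rw [hom_eq_VV_pow, pow_zero]; exact Submodule.one_le.mp le_rfl
      rw [cub_hom L h1]
      simpa using G.one
    · intro i
      rw [cub_hom L (X_mem_hom i)]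
      simp [hψ, hp]
    · intro i j
      rw [cub_hom L (homComponent_mul (X_mem_hom i) (X_mem_hom j))]
      have e : (X i + p i) * (X j + p j) = X i * X j + p i * X j + p j * X i + p i * p j := by ring
      have h4 := G.h4 _ (mul_mem_pow 4 (hp2 i) (hp2 j) le_rfl)
      simp only [LinearMap.comp_apply, AlgHom.toLinearMap_apply, map_mul, hψ, e, map_add, hpX, h4]
      rw [mul_comm (X j) (X i)]
      simp only [show ¬ (1 + 1 = 3) by omega, if_false]
      ring
    · intro i j k
      rw [cub_hom L (homComponent_mul (homComponent_mul (X_mem_hom i) (X_mem_hom j)) (X_mem_hom k)),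
        if_pos rfl]
      simp only [LinearMap.comp_apply, AlgHom.toLinearMap_apply, map_mul, hψ]
      rw [← sub_eq_zero, ← map_sub]
      apply G.h4
      have e : (X i + p i) * (X j + p j) * (X k + p k) - X i * X j * X k =
        p i * ((X j + p j) * (X k + p k)) + p j * (X i * (X k + p k)) + p k * (X i * X j) := by ring
      have hx : ∀ i, (X i + p i) ∈ mxR K n ^ 1 := fun i => by
        rw [pow_one]; exact add_mem (X_mem_mxR i) (hle (hp2 i))
      rw [e]
      exact add_mem (add_mem
        (mul_mem_pow 4 (hp2 i) (mul_mem_pow 2 (hx j) (hx k) le_rfl) le_rfl)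
        (mul_mem_pow 4 (hp2 j) (mul_mem_pow 2 (X_mem_pow i) (hx k) le_rfl) le_rfl))
        (mul_mem_pow 4 (hp2 k) (mul_mem_pow 2 (X_mem_pow i) (X_mem_pow j) le_rfl) le_rfl)
    · intro f hf
      exact G.h4 _ (alg_map_pow ψ hM 4 f hf)
    · intro f hf
      exact cub_pow4 L hf
  obtain ⟨e, -⟩ := iso_aux ψ hM hs (initialIdeal I) I (cub L) L G.h4 (initial_iff G) G.ann 1
    one_ne_zero (fun f => by rw [one_mul]; exact LinearMap.congr_fun key f)
  exact ⟨e⟩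

open MvPowerSeries in
lemma forward {K : Type*} [Field K] {n : ℕ} {I J : Ideal (MvPowerSeries (Fin n) K)}
    {L L' : MvPowerSeries (Fin n) K →ₗ[K] K} (G : Good I L) (G' : Good J L')
    (φ : (MvPowerSeries (Fin n) K ⧸ I) ≃ₐ[K] (MvPowerSeries (Fin n) K ⧸ J)) :
    ∃ e : (MvPowerSeries (Fin n) K ⧸ initialIdeal I) ≃ₐ[K]
          (MvPowerSeries (Fin n) K ⧸ initialIdeal J),
        ∀ d : ℕ, Submodule.map e.toLinearMap (gradePiece I d) = gradePiece J d := by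
  have hI4 : ∀ f ∈ mxR K n ^ 4, f ∈ I := fun f hf =>
    (G.ann f).mpr fun g => G.h4 _ (Ideal.mul_mem_right _ _ hf)
  have hJ4 : ∀ f ∈ mxR K n ^ 4, f ∈ J := fun f hf =>
    (G'.ann f).mpr fun g => G'.h4 _ (Ideal.mul_mem_right _ _ hf)
  have hle : mxR K n ^ 2 ≤ mxR K n := Ideal.pow_le_self (by omega)
  choose a ha using fun i => Ideal.Quotient.mk_surjective (φ (Ideal.Quotient.mk I (X i)))
  have haM : ∀ i, a i ∈ mxR K n := by
    intro i
    have h1 : (X i : MvPowerSeries (Fin n) K) ^ 4 ∈ I := hI4 _ (Ideal.pow_mem_pow (X_mem_mxR i) 4)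
    have h2 : a i ^ 4 ∈ J := by
      rw [← Ideal.Quotient.eq_zero_iff_mem, map_pow, ha, ← map_pow, ← map_pow,
        Ideal.Quotient.eq_zero_iff_mem.mpr h1, map_zero]
    have h3 := hle (G'.le2 h2)
    rw [mxR, RingHom.mem_ker, map_pow] at h3
    rw [mxR, RingHom.mem_ker]
    exact pow_eq_zero_iff (by omega) |>.mp h3
  obtain ⟨ψ, hψ, hψM⟩ := exists_hom a haM
  have hcomm : (Ideal.Quotient.mkₐ K J).toLinearMap ∘ₗ ψ.toLinearMap =
      φ.toLinearMap ∘ₗ (Ideal.Quotient.mkₐ K I).toLinearMap := by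
    have hX : ∀ i, (Ideal.Quotient.mk J) (ψ (X i)) = φ (Ideal.Quotient.mk I (X i)) := fun i => by
      rw [hψ, ha]
    apply VV_pow_induct
    · simp
    · intro i
      simpa using hX i
    · intro i j
      simpa [ha, hψ] using hX i
    · intro i j k
      simpa [ha, hψ] using hX i
    · intro f hf
      exact Ideal.Quotient.eq_zero_iff_mem.mpr (hJ4 _ (alg_map_pow ψ hψM 4 f hf))
    · intro f hf
      change φ (Ideal.Quotient.mk I f) = 0
      rw [Ideal.Quotient.eq_zero_iff_mem.mpr (hI4 f hf), map_zero]
  have hiff : ∀ f, ψ f ∈ J ↔ f ∈ I := by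
    intro f
    have h1 : Ideal.Quotient.mk J (ψ f) = φ (Ideal.Quotient.mk I f) :=
      LinearMap.congr_fun hcomm f
    rw [← Ideal.Quotient.eq_zero_iff_mem, h1, ← Ideal.Quotient.eq_zero_iff_mem]
    exact map_eq_zero_iff φ φ.injective
  obtain ⟨s, hs3, hLs⟩ := G.ex3
  have crit3 : ∀ {I : Ideal (MvPowerSeries (Fin n) K)}
      {L : MvPowerSeries (Fin n) K →ₗ[K] K}, Good I L → ∀ x ∈ mxR K n ^ 3, L x = 0 → x ∈ I := by
    intro I L G x hx h
    rw [G.ann]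
    exact crit G.h4 (Ideal.pow_le_pow_right (by omega) hx) h
      fun i => G.h4 _ (mul_mem_pow 4 hx (X_mem_pow i) le_rfl)
  have zero_of : ∀ {I : Ideal (MvPowerSeries (Fin n) K)}
      {L : MvPowerSeries (Fin n) K →ₗ[K] K}, Good I L → ∀ x ∈ I, L x = 0 := by
    intro I L G x hx
    simpa using (G.ann x).mp hx 1
  set c := L' (ψ s) / L s with hc
  have hc0 : c ≠ 0 := by
    intro h
    have h1 : L' (ψ s) = 0 := by
      rcases div_eq_zero_iff.mp h with h | h
      · exact h
      · exact absurd h hLs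
    exact hLs (zero_of G s ((hiff s).mp (crit3 G' _ (alg_map_pow ψ hψM 3 s hs3) h1)))
  have hcL : ∀ f ∈ mxR K n ^ 3, L' (ψ f) = c * L f := by
    intro f hf
    have hx : f - (L f / L s) • s ∈ mxR K n ^ 3 := by
      rw [Algebra.smul_def]
      exact sub_mem hf (Ideal.mul_mem_left _ _ hs3)
    have h1 := crit3 G _ hx (by
      rw [map_sub, map_smul, smul_eq_mul, div_mul_cancel₀ _ hLs, sub_self])
    have h2 := zero_of G' _ ((hiff _).mpr h1)
    rw [map_sub, map_smul, map_sub, map_smul, sub_eq_zero, smul_eq_mul] at h2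
    rw [h2, hc]
    ring
  -- linear part
  have hl1 : ∀ i, homogeneousComponent 1 (a i) ∈ homComponent K n 1 := fun i => comp_mem 1 (a i)
  have hlM : ∀ i, homogeneousComponent 1 (a i) ∈ mxR K n ^ 1 := fun i => hom_le_pow (hl1 i)
  have ha1 : ∀ i, a i ∈ mxR K n ^ 1 := fun i => by rw [pow_one]; exact haM i
  have hal : ∀ i, a i - homogeneousComponent 1 (a i) ∈ mxR K n ^ 2 := fun i => sub_comp_mem (ha1 i)
  obtain ⟨g, hg, hgM⟩ := exists_hom (fun i => homogeneousComponent 1 (a i))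
    (fun i => by simpa using hlM i)
  have key : cub L' ∘ₗ g.toLinearMap = c • cub L := by
    apply VV_pow_induct
    · have h1 : (1 : MvPowerSeries (Fin n) K) ∈ homComponent K n 0 := by
        rw [hom_eq_VV_pow, pow_zero]; exact Submodule.one_le.mp le_rfl
      simp [cub_hom _ h1]
    · intro i
      simp [cub_hom _ (X_mem_hom i), hg, cub_hom _ (hl1 i)]
    · intro i j
      simp [cub_hom _ (homComponent_mul (X_mem_hom i) (X_mem_hom j)), hg,
        cub_hom _ (homComponent_mul (hl1 i) (hl1 j))]
    · intro i j k
      have e1 := cub_hom L (homComponent_mul (homComponent_mul (X_mem_hom i) (X_mem_hom j))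
        (X_mem_hom k))
      have e2 := cub_hom L' (homComponent_mul (homComponent_mul (hl1 i) (hl1 j)) (hl1 k))
      rw [if_pos rfl] at e1 e2
      have e3 := hcL _ (mul_mem_pow 3 (mul_mem_pow 2 (X_mem_pow i) (X_mem_pow j) le_rfl)
        (X_mem_pow k) le_rfl)
      simp only [LinearMap.comp_apply, AlgHom.toLinearMap_apply, LinearMap.smul_apply, map_mul, hg,
        hψ, smul_eq_mul] at e3 ⊢
      rw [e1, e2, ← e3, eq_comm, ← sub_eq_zero, ← map_sub]
      apply G'.h4
      have e : ∀ x y z : MvPowerSeries (Fin n) K, a i * a j * a k - x * y * z =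
        (a i - x) * (a j * a k) + (a j - y) * (x * a k) + (a k - z) * (x * y) := by
        intro x y z; ring
      rw [e]
      exact add_mem (add_mem
        (mul_mem_pow 4 (hal i) (mul_mem_pow 2 (ha1 j) (ha1 k) le_rfl) le_rfl)
        (mul_mem_pow 4 (hal j) (mul_mem_pow 2 (hlM i) (ha1 k) le_rfl) le_rfl))
        (mul_mem_pow 4 (hal k) (mul_mem_pow 2 (hlM i) (hlM j) le_rfl) le_rfl)
    · intro f hf
      exact cub_pow4 L' (alg_map_pow g hgM 4 f hf)
    · intro f hf
      simp [cub_pow4 L hf]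
  have key' : ∀ f, cub L' (g f) = c * cub L f := fun f => LinearMap.congr_fun key f
  have hV1 : homComponent K n 1 = VV K n := by rw [hom_eq_VV_pow, pow_one]
  have hgV : ∀ v ∈ VV K n, g.toLinearMap v ∈ VV K n := by
    have : VV K n ≤ (VV K n).comap g.toLinearMap := by
      conv_lhs => rw [VV]
      rw [Submodule.span_le]
      rintro _ ⟨i, rfl⟩
      change g (X i) ∈ VV K n
      rw [hg, ← hV1]
      exact hl1 i
    exact this
  have hinj : Function.Injective (g.toLinearMap.restrict hgV) := by
    rw [injective_iff_map_eq_zero]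
    rintro ⟨v, hv⟩ h0
    have h0' : g v = 0 := congrArg Subtype.val h0
    rw [Subtype.ext_iff]
    have hv1 : v ∈ homComponent K n 1 := by rwa [hV1]
    refine nondeg G hv1 fun q hq => ?_
    have h1 := key' (v * q)
    rw [map_mul, h0', zero_mul, map_zero, cub_hom L (homComponent_mul hv1 hq), if_pos rfl] at h1
    exact (mul_eq_zero.mp h1.symm).resolve_left hc0
  have fd : FiniteDimensional K (VV K n) :=
    FiniteDimensional.span_of_finite K (Set.finite_range _)
  have hsurj := LinearMap.injective_iff_surjective.mp hinj
  have hmapV : (VV K n).map g.toLinearMap = VV K n := by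
    apply le_antisymm
    · rintro _ ⟨v, hv, rfl⟩
      exact hgV v hv
    · intro v hv
      obtain ⟨⟨w, hw⟩, hwv⟩ := hsurj ⟨v, hv⟩
      exact ⟨w, hw, congrArg Subtype.val hwv⟩
  have hs : ∀ x ∈ mxR K n, ∃ x' ∈ mxR K n, x - g x' ∈ mxR K n ^ 2 := by
    intro x hx
    have h1 : homogeneousComponent 1 x ∈ (VV K n).map g.toLinearMap := by
      rw [hmapV, ← hV1]; exact comp_mem 1 x
    obtain ⟨w, hw, hwx⟩ := h1
    have hwx' : g w = homogeneousComponent 1 x := hwx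
    refine ⟨w, by simpa using VV_mem_pow hw, ?_⟩
    rw [hwx']
    exact sub_comp_mem (show x ∈ mxR K n ^ 1 by rwa [pow_one])
  obtain ⟨e, he⟩ := iso_aux g hgM hs (initialIdeal I) (initialIdeal J) (cub L) (cub L')
    (fun f hf => cub_pow4 L' hf) (initial_iff G) (initial_iff G') c hc0 key'
  refine ⟨e, fun d => ?_⟩
  have hcomp : e.toLinearMap ∘ₗ (Ideal.Quotient.mkₐ K (initialIdeal I)).toLinearMap =
      (Ideal.Quotient.mkₐ K (initialIdeal J)).toLinearMap ∘ₗ g.toLinearMap :=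
    LinearMap.ext he
  rw [gradePiece, gradePiece, ← Submodule.map_comp, hcomp, Submodule.map_comp, hom_eq_VV_pow]
  congr 1
  rw [Submodule.map_pow, hmapV]


/-- Two Artinian Gorenstein local `K`-algebras `A = R/I`, `B = R/J` with Hilbert
function `{1, n, n, 1}` are isomorphic as `K`-algebras iff their associated
graded rings `gr_m(A) = R/I^*`, `gr_n(B) = R/J^*` are isomorphic as graded
`K`-algebras (i.e. by an isomorphism matching up the graded pieces). -/
theorem iso_iff_gr_iso_of_hilbert_1nn1
    {K : Type*} [Field K] [IsAlgClosed K] [CharZero K] {n : ℕ}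
    (I J : Ideal (MvPowerSeries (Fin n) K))
    (hI0 : hilbQ I 0 = 1) (hI1 : hilbQ I 1 = n) (hI2 : hilbQ I 2 = n) (hI3 : hilbQ I 3 = 1)
    (hIm : mxR K n ^ 4 ≤ I) (hIG : socDimQ I = 1)
    (hJ0 : hilbQ J 0 = 1) (hJ1 : hilbQ J 1 = n) (hJ2 : hilbQ J 2 = n) (hJ3 : hilbQ J 3 = 1)
    (hJm : mxR K n ^ 4 ≤ J) (hJG : socDimQ J = 1) :
    Nonempty ((MvPowerSeries (Fin n) K ⧸ I) ≃ₐ[K] (MvPowerSeries (Fin n) K ⧸ J)) ↔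
      ∃ e : (MvPowerSeries (Fin n) K ⧸ initialIdeal I) ≃ₐ[K]
          (MvPowerSeries (Fin n) K ⧸ initialIdeal J),
        ∀ d : ℕ, Submodule.map e.toLinearMap (gradePiece I d) = gradePiece J d := by

  obtain ⟨L, G⟩ := exists_good I hI0 hI1 hI2 hI3 hIm hIG
  obtain ⟨L', G'⟩ := exists_good J hJ0 hJ1 hJ2 hJ3 hJm hJG
  constructor
  · rintro ⟨φ⟩
    exact forward G G' φ
  · rintro ⟨e, -⟩
    obtain ⟨e1⟩ := gr_iso G
    obtain ⟨e2⟩ := gr_iso G'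
    exact ⟨e1.symm.trans (e.trans e2)⟩
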